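/- arXiv:1101.4060 — 2 statements merged into one kernel-verified Lean document; each statement's English description precedes it below -/
import Mathlib

section
/- For all integers m, n ≥ 0, the product {m}!·{n}! divides {m+n}! in the polynomial ring ℤ[s,t]; that is, there exists a polynomial P ∈ ℤ[s,t] with P·{m}!·{n}! = {m+n}!. -/
/-!
The addition formula `{m+n+2} = {m+2}·{n+1} + t·{m+1}·{n}` makes the quotients
`C(m,n) = {m+n}! / ({m}!·{n}!)` satisfy the Pascal-type recurrence
`C(m+1,n+1) = {m+2}·C(m+1,n) + t·{n}·C(m,n+1)`, with `C(m,0) = C(0,n) = 1`.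
Since this recurrence has polynomial coefficients, every `C(m,n)` lies in ℤ[s,t].
The formula is `lucas_add`.
-/

open MvPolynomial

/-- The Lucas polynomials in ℤ[s,t], where `X 0` is `s` and `X 1` is `t`:
`{0} = 0`, `{1} = 1`, `{n} = s·{n-1} + t·{n-2}`. -/
noncomputable def lucas : ℕ → MvPolynomial (Fin 2) ℤ
  | 0 => 0
  | 1 => 1
  | n + 2 => X 0 * lucas (n + 1) + X 1 * lucas n

/-- The Lucas factorial: `{0}! = 1`, `{n}! = {n}·{n-1}!`. -/
noncomputable def lucasFactorial : ℕ → MvPolynomial (Fin 2) ℤ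
  | 0 => 1
  | n + 1 => lucas (n + 1) * lucasFactorial n

/-- The addition formula for Lucas polynomials: `{m+n+1} = {m+1}·{n+1} + t·{m}·{n}`. -/
theorem lucas_add (m n : ℕ) :
    lucas (m + n + 1) = lucas (m + 1) * lucas (n + 1) + X 1 * lucas m * lucas n := by
  induction n generalizing m with
  | zero => simp [lucas]
  | succ n ih =>
    have h := ih (m + 1)
    rw [show m + (n + 1) + 1 = m + 1 + n + 1 by omega, h]
    simp only [lucas]
    ring

theorem lucasFactorial_mul_dvd (m n : ℕ) :
    ∃ P : MvPolynomial (Fin 2) ℤ,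
      P * lucasFactorial m * lucasFactorial n = lucasFactorial (m + n) := by
  induction m generalizing n with
  | zero => exact ⟨1, by simp [lucasFactorial]⟩
  | succ m ihm =>
    induction n with
    | zero => exact ⟨1, by simp [lucasFactorial]⟩
    | succ n ihn =>
      obtain ⟨P, hP⟩ := ihn
      obtain ⟨Q, hQ⟩ := ihm (n + 1)
      refine ⟨lucas (m + 2) * P + X 1 * lucas n * Q, ?_⟩
      have hadd := lucas_add (m + 1) n
      rw [show m + 1 + n = m + n + 1 by omega] at hP hadd
      rw [show m + (n + 1) = m + n + 1 by omega] at hQ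
      rw [show m + 1 + (n + 1) = m + n + 1 + 1 by omega,
        show lucasFactorial (m + n + 1 + 1)
          = lucas (m + n + 1 + 1) * lucasFactorial (m + n + 1) from rfl, hadd]
      rw [show lucasFactorial (n + 1) = lucas (n + 1) * lucasFactorial n from rfl] at hQ ⊢
      rw [show lucasFactorial (m + 1) = lucas (m + 1) * lucasFactorial m from rfl] at hP ⊢
      -- `{m+n+1}!` is factored through `P` in the first summand of `hadd`, through `Q` in the second.
      linear_combination lucas (m + 2) * lucas (n + 1) * hP + X 1 * lucas (m + 1) * lucas n * hQ
end

section
/- For every integer n ≥ 1, the Sagan–Savage Lucas–Catalan polynomial (1/{n+1})·{2n choose n} has nonnegative integer coefficients; that is, there exists a polynomial P ∈ ℤ[s,t] all of whose coefficients are nonnegative such that P·{n+1}·{n}!·{n}! = {2n}!. -/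
/-!
The addition formula `{m+n+1} = {m+1}{n+1} + t{m}{n}` drives everything. Applied to the factor
`{m+n}` of `{m+n}!`, it gives the Pascal-type recursion
`{m+n choose m} = {m+1}·{m+n-1 choose m} + t·{n-1}·{m+n-1 choose m-1}`,
so every lucasnomial is a polynomial with nonnegative coefficients. Applied to
`{2n} = {n}·({n+1} + t{n-1})`, it gives
`(1/{n+1})·{2n choose n} = {2n-1 choose n-1} + t·{2n-1 choose n-2}`,
and both terms on the right are nonnegative.

To avoid division, `lucasnomial` is defined by the recursion, and the factorial formula is proved
for it. Having nonnegative coefficients is expressed as lying in the image of `ℕ[s,t]`, which is a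
subsemiring of `ℤ[s,t]`.
-/

open MvPolynomial

/-- The lucasnomial coefficient `{m+n choose m}`, indexed by the two parts `m` and `n` and given by
its Pascal-type recursion. -/
noncomputable def lucasnomial : ℕ → ℕ → MvPolynomial (Fin 2) ℤ
  | 0, _ => 1
  | _ + 1, 0 => 1
  | m + 1, n + 1 => lucas (m + 2) * lucasnomial (m + 1) n + X 1 * lucas n * lucasnomial m (n + 1)

theorem lucasnomial_mul_factorial (m n : ℕ) :
    lucasnomial m n * lucasFactorial m * lucasFactorial n = lucasFactorial (m + n) := by
  induction m, n using lucasnomial.induct with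
  | case1 n => simp [lucasnomial, lucasFactorial]
  | case2 m => simp [lucasnomial, lucasFactorial]
  | case3 m n ih₁ ih₂ =>
    have h : lucasFactorial (m + 1 + (n + 1)) = lucas (m + 1 + n + 1) * lucasFactorial (m + 1 + n) :=
      rfl
    have hm : lucasFactorial (m + 1) = lucas (m + 1) * lucasFactorial m := rfl
    have hn : lucasFactorial (n + 1) = lucas (n + 1) * lucasFactorial n := rfl
    rw [show m + (n + 1) = m + 1 + n by ring] at ih₂
    rw [h, lucas_add, add_mul, lucasnomial]
    linear_combination (lucas (m + 2) * lucas (n + 1)) * ih₁ + X 1 * lucas (m + 1) * lucas n * ih₂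
      + lucas (m + 2) * lucasnomial (m + 1) n * lucasFactorial (m + 1) * hn
      + X 1 * lucas n * lucasnomial m (n + 1) * lucasFactorial (n + 1) * hm

/-- The subsemiring of polynomials with nonnegative coefficients, encoded as the image of
`ℕ[s,t]` in `ℤ[s,t]`. -/
noncomputable def nonnegCoeffs : Subsemiring (MvPolynomial (Fin 2) ℤ) :=
  (MvPolynomial.map (Nat.castRingHom ℤ)).rangeS

theorem coeff_nonneg_of_mem {p : MvPolynomial (Fin 2) ℤ} (hp : p ∈ nonnegCoeffs)
    (k : Fin 2 →₀ ℕ) : 0 ≤ p.coeff k := by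
  obtain ⟨q, rfl⟩ := hp
  simp [coeff_map]

theorem X_mem_nonnegCoeffs (i : Fin 2) : X i ∈ nonnegCoeffs := ⟨X i, by simp⟩

theorem lucas_mem_nonnegCoeffs (n : ℕ) : lucas n ∈ nonnegCoeffs := by
  induction n using Nat.twoStepInduction with
  | zero => exact zero_mem _
  | one => exact one_mem _
  | more n ih₀ ih₁ =>
    exact add_mem (mul_mem (X_mem_nonnegCoeffs 0) ih₁) (mul_mem (X_mem_nonnegCoeffs 1) ih₀)

theorem lucasnomial_mem_nonnegCoeffs (m n : ℕ) : lucasnomial m n ∈ nonnegCoeffs := by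
  induction m, n using lucasnomial.induct with
  | case1 n => simp [lucasnomial]
  | case2 m => simp [lucasnomial]
  | case3 m n ih₁ ih₂ =>
    rw [lucasnomial]
    exact add_mem (mul_mem (lucas_mem_nonnegCoeffs _) ih₁)
      (mul_mem (mul_mem (X_mem_nonnegCoeffs 1) (lucas_mem_nonnegCoeffs _)) ih₂)

theorem lucasCatalan_nonneg_coeffs (n : ℕ) (hn : 1 ≤ n) :
    ∃ P : MvPolynomial (Fin 2) ℤ,
      (∀ k : Fin 2 →₀ ℕ, 0 ≤ P.coeff k) ∧
      P * lucas (n + 1) * lucasFactorial n * lucasFactorial n =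
        lucasFactorial (2 * n) := by
  match n, hn with
  -- For `n = 1` the term `{2n-1 choose n-2}` is absent.
  | 1, _ => exact ⟨1, coeff_nonneg_of_mem (one_mem _), by simp [lucas, lucasFactorial]⟩
  | j + 2, _ =>
    refine ⟨lucasnomial (j + 1) (j + 2) + X 1 * lucasnomial j (j + 3),
      coeff_nonneg_of_mem (add_mem (lucasnomial_mem_nonnegCoeffs _ _)
        (mul_mem (X_mem_nonnegCoeffs 1) (lucasnomial_mem_nonnegCoeffs _ _))), ?_⟩
    have h₁ := lucasnomial_mul_factorial (j + 1) (j + 2)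
    have h₂ := lucasnomial_mul_factorial j (j + 3)
    rw [show j + 1 + (j + 2) = 2 * j + 3 by ring] at h₁
    rw [show j + (j + 3) = 2 * j + 3 by ring] at h₂
    have h : lucasFactorial (2 * (j + 2)) = lucas (2 * j + 4) * lucasFactorial (2 * j + 3) := rfl
    have hadd := lucas_add (j + 2) (j + 1)
    rw [show j + 2 + (j + 1) + 1 = 2 * j + 4 by ring] at hadd
    have f₁ : lucasFactorial (j + 1) = lucas (j + 1) * lucasFactorial j := rfl
    have f₂ : lucasFactorial (j + 2) = lucas (j + 2) * lucasFactorial (j + 1) := rfl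
    have f₃ : lucasFactorial (j + 3) = lucas (j + 3) * lucasFactorial (j + 2) := rfl
    rw [h, hadd]
    rw [f₃, f₂, f₁] at h₂
    rw [f₂, f₁] at h₁
    rw [f₂, f₁]
    linear_combination lucas (j + 3) * lucas (j + 2) * h₁ + X 1 * lucas (j + 2) * lucas (j + 1) * h₂
end
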